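/- Let N, M be positive integers, let H be an N×M complex matrix, ĥ ∈ ℂ^N, let β be a real number with 0 < β ≤ 1, and let ε > 0. Define Z(μ) = (I − H Hᴴ (β⁻² μ I + H Hᴴ)⁻¹) H, Υ(μ) = diag(ĥ)ᴴ Z(μ) Z(μ)ᴴ diag(ĥ) and Γ(μ) = β² diag(ĥ)ᴴ H Hᴴ (μ I + β² H Hᴴ)⁻² H Hᴴ diag(ĥ). Suppose μₖ > 0, μₖ₊₁ > 0 and θₖ, θₖ₊₁ ∈ ℂ^N satisfy: (i) q_{Γ(μₖ)}(θₖ) ≥ ε²; (ii) q_{Γ(μₖ₊₁)}(θₖ) = ε²; (iii) q_{Υ(μₖ₊₁)}(θₖ₊₁) ≥ q_{Υ(μₖ₊₁)}(θₖ). Then μₖ ≤ μₖ₊₁ and q_{Υ(μₖ₊₁)}(θₖ₊₁) ≥ q_{Υ(μₖ)}(θₖ); that is, the objective values produced by the alternating optimization are monotone nondecreasing across iterations. -/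

import Mathlib

/-!
Diagonalising `H Hᴴ`, the matrices `Γ(μ)` and `Υ(μ)` become the congruences by `diag(ĥ)` of
`(βx / (μ + β²x))²` and `x (μ / (μ + β²x))²` evaluated at `x = H Hᴴ`. For `x ≥ 0` the first function
decreases with `μ` and the second increases, so the same holds for `Γ` and `Υ` in the Loewner order.
On the bounded spectrum of `H Hᴴ`, moreover, `μ < ν` improves the first comparison to
`Γ(ν) ≤ c Γ(μ)` with a constant `c < 1`. Were `μₖ₊₁ < μₖ`, this would give `ε² ≤ c ε²`; hence
`μₖ ≤ μₖ₊₁`, and the objective grows both in the dual update, by monotonicity of `Υ`, and in the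
phase-shift update, by assumption.
-/

open Matrix

/-- `Z(μ) = (I − H Hᴴ (β⁻²μ I + H Hᴴ)⁻¹) H`. -/
noncomputable def Zmat {N M : ℕ} (H : Matrix (Fin N) (Fin M) ℂ) (β μ : ℝ) :
    Matrix (Fin N) (Fin M) ℂ :=
  ((1 : Matrix (Fin N) (Fin N) ℂ)
    - H * Hᴴ * (((((β : ℂ) ^ 2)⁻¹ * (μ : ℂ)) • 1 + H * Hᴴ)⁻¹)) * H

/-- `Υ(μ) = diag(ĥ)ᴴ Z(μ) Z(μ)ᴴ diag(ĥ)`. -/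
noncomputable def Ups {N M : ℕ} (H : Matrix (Fin N) (Fin M) ℂ) (β μ : ℝ)
    (hhat : Fin N → ℂ) : Matrix (Fin N) (Fin N) ℂ :=
  (Matrix.diagonal hhat)ᴴ * Zmat H β μ * (Zmat H β μ)ᴴ * Matrix.diagonal hhat

/-- `Γ(μ) = β² diag(ĥ)ᴴ H Hᴴ (μ I + β² H Hᴴ)⁻² H Hᴴ diag(ĥ)`. -/
noncomputable def Gam {N M : ℕ} (H : Matrix (Fin N) (Fin M) ℂ) (β μ : ℝ)
    (hhat : Fin N → ℂ) : Matrix (Fin N) (Fin N) ℂ :=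
  ((β : ℂ) ^ 2) •
    ((Matrix.diagonal hhat)ᴴ * (H * Hᴴ)
      * (((μ : ℂ) • 1 + ((β : ℂ) ^ 2) • (H * Hᴴ))⁻¹
          * ((μ : ℂ) • 1 + ((β : ℂ) ^ 2) • (H * Hᴴ))⁻¹)
      * (H * Hᴴ) * Matrix.diagonal hhat)

section FunctionalCalculus

open scoped Ring

theorem one_sub_mul_ringInverse_smul_one_add {R A : Type*} [CommSemiring R] [Ring A] [Algebra R A]
    {a : A} {r : R} (h : IsUnit (r • 1 + a)) :
    1 - a * (r • 1 + a)⁻¹ʳ = r • (r • 1 + a)⁻¹ʳ := by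
  have hcancel := Ring.mul_inverse_cancel _ h
  rw [add_mul, smul_one_mul] at hcancel
  exact sub_eq_of_eq_add hcancel.symm

theorem add_mul_ne_zero_of_mem_spectrum {A : Type*} [Ring A] [Algebra ℝ A]
    [PartialOrder A] [NonnegSpectrumClass ℝ A] {a : A} {r s x : ℝ} (ha : 0 ≤ a)
    (hr : 0 < r) (hs : 0 ≤ s) (hx : x ∈ spectrum ℝ a) : r + s * x ≠ 0 := by
  have := spectrum_nonneg_of_nonneg ha hx
  positivity

variable {A : Type*} [Ring A] [StarRing A] [TopologicalSpace A] [Algebra ℝ A]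
  [ContinuousFunctionalCalculus ℝ A IsSelfAdjoint]

theorem smul_one_add_smul_eq_cfc {a : A} (ha : IsSelfAdjoint a) (r s : ℝ) :
    r • 1 + s • a = cfc (fun x ↦ r + s * x) a := by
  rw [cfc_const_add r _ a, cfc_const_mul_id s a, Algebra.algebraMap_eq_smul_one]

variable [PartialOrder A] [StarOrderedRing A] [NonnegSpectrumClass ℝ A]

theorem isUnit_smul_one_add_smul {a : A} {r s : ℝ} (ha : 0 ≤ a) (hr : 0 < r) (hs : 0 ≤ s) :
    IsUnit (r • 1 + s • a) := by
  rw [smul_one_add_smul_eq_cfc (.of_nonneg ha), isUnit_cfc_iff _ a]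
  exact fun x ↦ add_mul_ne_zero_of_mem_spectrum ha hr hs

theorem ringInverse_smul_one_add_smul_eq_cfc {a : A} {r s : ℝ} (ha : 0 ≤ a) (hr : 0 < r)
    (hs : 0 ≤ s) : (r • 1 + s • a)⁻¹ʳ = cfc (fun x ↦ (r + s * x)⁻¹) a := by
  rw [smul_one_add_smul_eq_cfc (.of_nonneg ha),
    cfc_inv _ a fun x ↦ add_mul_ne_zero_of_mem_spectrum ha hr hs]

theorem one_sub_mul_ringInverse_smul_one_add_eq_cfc {a : A} {r : ℝ} (ha : 0 ≤ a) (hr : 0 < r) :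
    1 - a * (r • 1 + a)⁻¹ʳ = cfc (fun x ↦ r / (r + x)) a := by
  have hunit : IsUnit (r • 1 + a) := by
    simpa using isUnit_smul_one_add_smul ha hr zero_le_one
  have hinv : (r • 1 + a)⁻¹ʳ = cfc (fun x ↦ (r + x)⁻¹) a := by
    simpa using ringInverse_smul_one_add_smul_eq_cfc ha hr zero_le_one
  have hcont : ContinuousOn (fun x ↦ (r + x)⁻¹) (spectrum ℝ a) := by
    refine ContinuousOn.inv₀ (by fun_prop) fun x hx ↦ ?_
    simpa using add_mul_ne_zero_of_mem_spectrum ha hr zero_le_one hx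
  rw [one_sub_mul_ringInverse_smul_one_add hunit, hinv, ← cfc_const_mul r _ a]
  simp only [div_eq_mul_inv]

end FunctionalCalculus

section QuadraticForm

open scoped MatrixOrder

variable {n 𝕜 : Type*} [Fintype n] [RCLike 𝕜]

/-- The quadratic form `q_A(θ) = θᵀ A θ̄`, real part taken so that it is real-valued for every
matrix `A`; for Hermitian `A` nothing is lost. -/
def conjQuadForm (A : Matrix n n 𝕜) (θ : n → 𝕜) : ℝ :=
  RCLike.re (θ ⬝ᵥ (A *ᵥ star θ))

theorem conjQuadForm_mono {A B : Matrix n n 𝕜} (hAB : A ≤ B) (θ : n → 𝕜) :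
    conjQuadForm A θ ≤ conjQuadForm B θ := by
  have h := (Matrix.le_iff.mp hAB).re_dotProduct_nonneg (star θ)
  rwa [star_star, sub_mulVec, dotProduct_sub, map_sub, sub_nonneg] at h

theorem conjQuadForm_smul (c : ℝ) (A : Matrix n n 𝕜) (θ : n → 𝕜) :
    conjQuadForm (c • A) θ = c * conjQuadForm A θ := by
  rw [conjQuadForm, smul_mulVec, dotProduct_smul, RCLike.smul_re, conjQuadForm]

end QuadraticForm

section Gains

open Set

/-- The value at `x` of the function of `H Hᴴ` that `Γ(μ)` conjugates by `diag(ĥ)`. -/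
noncomputable def constraintGain (β μ x : ℝ) : ℝ :=
  (β * x / (μ + β ^ 2 * x)) ^ 2

/-- The factor by which the residual matrix `Z(μ)` scales `H` along an eigendirection of `H Hᴴ` with
eigenvalue `x`. -/
noncomputable def residualGain (β μ x : ℝ) : ℝ :=
  μ / (μ + β ^ 2 * x)

/-- The value at `x` of the function of `H Hᴴ` that `Υ(μ)` conjugates by `diag(ĥ)`. -/
noncomputable def objectiveGain (β μ x : ℝ) : ℝ :=
  x * residualGain β μ x ^ 2

variable {β μ ν x R : ℝ}

theorem continuousOn_constraintGain (hμ : 0 < μ) : ContinuousOn (constraintGain β μ) (Ici 0) := by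
  have hpos : ∀ x ∈ Ici (0 : ℝ), μ + β ^ 2 * x ≠ 0 := fun x (hx : 0 ≤ x) ↦ by positivity
  unfold constraintGain
  fun_prop (disch := assumption)

theorem continuousOn_residualGain (hμ : 0 < μ) : ContinuousOn (residualGain β μ) (Ici 0) := by
  have hpos : ∀ x ∈ Ici (0 : ℝ), μ + β ^ 2 * x ≠ 0 := fun x (hx : 0 ≤ x) ↦ by positivity
  unfold residualGain
  fun_prop (disch := assumption)

theorem continuousOn_objectiveGain (hμ : 0 < μ) : ContinuousOn (objectiveGain β μ) (Ici 0) :=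
  continuousOn_id.mul ((continuousOn_residualGain hμ).pow 2)

theorem residualGain_mono (hμ : 0 < μ) (hμν : μ ≤ ν) (hx : 0 ≤ x) :
    residualGain β μ x ≤ residualGain β ν x := by
  have hν : 0 < ν := hμ.trans_le hμν
  unfold residualGain
  rw [div_le_div_iff₀ (by positivity) (by positivity)]
  linarith [mul_le_mul_of_nonneg_right hμν (by positivity : 0 ≤ β ^ 2 * x)]

theorem objectiveGain_mono (hμ : 0 < μ) (hμν : μ ≤ ν) (hx : 0 ≤ x) :
    objectiveGain β μ x ≤ objectiveGain β ν x := by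
  have hnonneg : 0 ≤ residualGain β μ x := by
    unfold residualGain
    positivity
  exact mul_le_mul_of_nonneg_left (pow_le_pow_left₀ hnonneg (residualGain_mono hμ hμν hx) 2) hx

theorem exists_constraintGain_le_mul (hμ : 0 < μ) (hμν : μ < ν) (hR : 0 ≤ R) :
    ∃ c < 1, ∀ x ∈ Icc 0 R, constraintGain β ν x ≤ c * constraintGain β μ x := by
  have hν : 0 < ν := hμ.trans hμν
  -- The ratio of the two gains is `((μ + β²x) / (ν + β²x))²`, which increases with `x`.
  refine ⟨((μ + β ^ 2 * R) / (ν + β ^ 2 * R)) ^ 2, ?_, fun x ⟨hx, hxR⟩ ↦ ?_⟩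
  · have hlt : (μ + β ^ 2 * R) / (ν + β ^ 2 * R) < 1 := by
      rw [div_lt_one (by positivity)]
      gcongr
    exact pow_lt_one₀ (by positivity) hlt two_ne_zero
  · have hratio : (μ + β ^ 2 * x) / (ν + β ^ 2 * x) ≤ (μ + β ^ 2 * R) / (ν + β ^ 2 * R) := by
      rw [div_le_div_iff₀ (by positivity) (by positivity)]
      have hxR' : β ^ 2 * x ≤ β ^ 2 * R := by gcongr
      linarith [mul_le_mul_of_nonneg_left hxR' (sub_nonneg.mpr hμν.le)]
    calc constraintGain β ν x
        = ((μ + β ^ 2 * x) / (ν + β ^ 2 * x)) ^ 2 * constraintGain β μ x := by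
          unfold constraintGain
          field_simp
      _ ≤ ((μ + β ^ 2 * R) / (ν + β ^ 2 * R)) ^ 2 * constraintGain β μ x := by
          unfold constraintGain
          gcongr

end Gains

section LoewnerOrder

open scoped MatrixOrder ComplexOrder

theorem spectrum_self_mul_conjTranspose_subset_Ici {m n 𝕜 : Type*} [Fintype m] [DecidableEq m]
    [Fintype n] [RCLike 𝕜] (H : Matrix m n 𝕜) : spectrum ℝ (H * Hᴴ) ⊆ Set.Ici 0 :=
  fun _ hx ↦ spectrum_nonneg_of_nonneg (posSemidef_self_mul_conjTranspose H).nonneg hx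

variable {N M : ℕ} (H : Matrix (Fin N) (Fin M) ℂ) {β μ ν ε : ℝ} (hhat : Fin N → ℂ)

theorem Gam_eq_conj_cfc (hμ : 0 < μ) :
    Gam H β μ hhat = (diagonal hhat)ᴴ * cfc (constraintGain β μ) (H * Hᴴ) * diagonal hhat := by
  set A := H * Hᴴ with hA
  have hA0 : 0 ≤ A := (posSemidef_self_mul_conjTranspose H).nonneg
  let resolvent (x : ℝ) : ℝ := (μ + β ^ 2 * x)⁻¹
  have hcont : ContinuousOn resolvent (spectrum ℝ A) :=
    ContinuousOn.inv₀ (by fun_prop) fun x ↦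
      add_mul_ne_zero_of_mem_spectrum hA0 hμ (sq_nonneg β)
  have hinv : ((μ : ℂ) • 1 + ((β : ℂ) ^ 2) • A)⁻¹ = cfc resolvent A := by
    rw [nonsing_inv_eq_ringInverse, ← Complex.ofReal_pow, Complex.coe_smul, Complex.coe_smul,
      ringInverse_smul_one_add_smul_eq_cfc hA0 hμ (sq_nonneg β)]
  have hgain : cfc (constraintGain β μ) A
      = β ^ 2 • (A * (cfc resolvent A * cfc resolvent A) * A) :=
    calc cfc (constraintGain β μ) A
        = cfc (fun x ↦ β ^ 2 * (x * (resolvent x * resolvent x) * x)) A := by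
          congr 1
          ext x
          simp only [constraintGain, resolvent]
          ring
      _ = β ^ 2 • (A * (cfc resolvent A * cfc resolvent A) * A) := by
          rw [cfc_const_mul _ _ A, cfc_mul _ _ A, cfc_mul _ _ A, cfc_mul _ _ A, cfc_id' ℝ A]
  rw [Gam, ← hA, hinv, hgain, ← Complex.ofReal_pow, Complex.coe_smul]
  simp only [Matrix.mul_assoc, Matrix.mul_smul, Matrix.smul_mul]

theorem Zmat_eq_cfc_residualGain_mul (hβ : β ≠ 0) (hμ : 0 < μ) :
    Zmat H β μ = cfc (residualGain β μ) (H * Hᴴ) * H := by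
  have hr : 0 < (β ^ 2)⁻¹ * μ := by positivity
  have hcast : ((β : ℂ) ^ 2)⁻¹ * (μ : ℂ) = (((β ^ 2)⁻¹ * μ : ℝ) : ℂ) := by push_cast; rfl
  rw [Zmat, nonsing_inv_eq_ringInverse, hcast, Complex.coe_smul,
    one_sub_mul_ringInverse_smul_one_add_eq_cfc (posSemidef_self_mul_conjTranspose H).nonneg hr]
  congr 2
  ext x
  rw [residualGain]
  field_simp

theorem Ups_eq_conj_cfc (hβ : β ≠ 0) (hμ : 0 < μ) :
    Ups H β μ hhat = (diagonal hhat)ᴴ * cfc (objectiveGain β μ) (H * Hᴴ) * diagonal hhat := by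
  have hcont := (continuousOn_residualGain (β := β) hμ).mono
    (spectrum_self_mul_conjTranspose_subset_Ici H)
  have hA : IsSelfAdjoint (H * Hᴴ) := isHermitian_mul_conjTranspose_self H
  have hself : (cfc (residualGain β μ) (H * Hᴴ))ᴴ = cfc (residualGain β μ) (H * Hᴴ) :=
    cfc_predicate (residualGain β μ) (H * Hᴴ)
  have hgain : cfc (objectiveGain β μ) (H * Hᴴ)
      = cfc (residualGain β μ) (H * Hᴴ) * (H * Hᴴ) * cfc (residualGain β μ) (H * Hᴴ) :=
    calc cfc (objectiveGain β μ) (H * Hᴴ)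
        = cfc (fun x ↦ residualGain β μ x * x * residualGain β μ x) (H * Hᴴ) := by
          congr 1
          ext x
          rw [objectiveGain]
          ring
      _ = cfc (residualGain β μ) (H * Hᴴ) * (H * Hᴴ) * cfc (residualGain β μ) (H * Hᴴ) := by
          rw [cfc_mul _ _ (H * Hᴴ), cfc_mul _ _ (H * Hᴴ), cfc_id' ℝ (H * Hᴴ)]
  rw [Ups, Zmat_eq_cfc_residualGain_mul H hβ hμ, conjTranspose_mul, hself, hgain]
  simp only [Matrix.mul_assoc]

theorem Ups_mono (hβ : β ≠ 0) (hμ : 0 < μ) (hμν : μ ≤ ν) : Ups H β μ hhat ≤ Ups H β ν hhat := by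
  have hspec := spectrum_self_mul_conjTranspose_subset_Ici H
  have hν : 0 < ν := hμ.trans_le hμν
  rw [Ups_eq_conj_cfc H hhat hβ hμ, Ups_eq_conj_cfc H hhat hβ hν]
  exact star_left_conjugate_le_conjugate
    (cfc_mono (fun x hx ↦ objectiveGain_mono hμ hμν (hspec hx))
      ((continuousOn_objectiveGain hμ).mono hspec) ((continuousOn_objectiveGain hν).mono hspec)) _

theorem exists_Gam_le_smul_Gam (hμ : 0 < μ) (hμν : μ < ν) :
    ∃ c < (1 : ℝ), Gam H β ν hhat ≤ c • Gam H β μ hhat := by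
  have hspec := spectrum_self_mul_conjTranspose_subset_Ici H
  have hν : 0 < ν := hμ.trans hμν
  have hcont := (continuousOn_constraintGain (β := β) hμ).mono hspec
  obtain ⟨R, hR⟩ := (ContinuousFunctionalCalculus.isCompact_spectrum (R := ℝ) (H * Hᴴ)).bddAbove
  obtain ⟨c, hc, hle⟩ := exists_constraintGain_le_mul (β := β) hμ hμν (le_max_right R 0)
  refine ⟨c, hc, ?_⟩
  rw [Gam_eq_conj_cfc H hhat hμ, Gam_eq_conj_cfc H hhat hν, ← smul_mul_assoc, ← mul_smul_comm,
    ← cfc_const_mul c _ _ hcont]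
  exact star_left_conjugate_le_conjugate
    (cfc_mono (fun x hx ↦ hle x ⟨hspec hx, (hR hx).trans (le_max_left R 0)⟩)
      ((continuousOn_constraintGain hν).mono hspec) (continuousOn_const.mul hcont)) _

theorem conjQuadForm_Gam_lt {θ : Fin N → ℂ} (hμ : 0 < μ) (hμν : μ < ν)
    (hpos : 0 < conjQuadForm (Gam H β μ hhat) θ) :
    conjQuadForm (Gam H β ν hhat) θ < conjQuadForm (Gam H β μ hhat) θ := by
  obtain ⟨c, hc, hle⟩ := exists_Gam_le_smul_Gam H (β := β) hhat hμ hμν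
  calc conjQuadForm (Gam H β ν hhat) θ ≤ conjQuadForm (c • Gam H β μ hhat) θ :=
        conjQuadForm_mono hle θ
    _ = c * conjQuadForm (Gam H β μ hhat) θ := conjQuadForm_smul c _ θ
    _ < conjQuadForm (Gam H β μ hhat) θ := mul_lt_of_lt_one_left hpos hc

theorem alternating_optimization_monotone_general (hβ : β ≠ 0) (hε : ε ≠ 0) (hμ : 0 < μ)
    (hν : 0 < ν) {θ θ' : Fin N → ℂ} (hfeas : ε ^ 2 ≤ conjQuadForm (Gam H β μ hhat) θ)
    (hdual : conjQuadForm (Gam H β ν hhat) θ = ε ^ 2)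
    (hphase : conjQuadForm (Ups H β ν hhat) θ ≤ conjQuadForm (Ups H β ν hhat) θ') :
    μ ≤ ν ∧ conjQuadForm (Ups H β μ hhat) θ ≤ conjQuadForm (Ups H β ν hhat) θ' := by
  have hμν : μ ≤ ν := by
    by_contra! hνμ
    have hpos : 0 < conjQuadForm (Gam H β ν hhat) θ := hdual ▸ by positivity
    exact (conjQuadForm_Gam_lt H hhat hν hνμ hpos).not_ge (hdual.trans_le hfeas)
  exact ⟨hμν, (conjQuadForm_mono (Ups_mono H hhat hβ hμ hμν) θ).trans hphase⟩

end LoewnerOrder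

/-- monotone improvement of the alternating optimization: if `θₖ` is
feasible at `μₖ`, `μₖ₊₁` solves the dual update `q_{Γ(μₖ₊₁)}(θₖ) = ε²`, and `θₖ₊₁` does
not decrease the objective at `μₖ₊₁`, then `μₖ ≤ μₖ₊₁` and the objective value does not
decrease across the iteration. -/
theorem alternating_optimization_monotone (N M : ℕ) (hN : 0 < N) (hM : 0 < M)
    (H : Matrix (Fin N) (Fin M) ℂ) (hhat : Fin N → ℂ) (β ε : ℝ)
    (hβ : 0 < β) (hβ1 : β ≤ 1) (hε : 0 < ε)
    (μk μk1 : ℝ) (hμk : 0 < μk) (hμk1 : 0 < μk1)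
    (θk θk1 : Fin N → ℂ)
    (h1 : (θk ⬝ᵥ (Gam H β μk hhat *ᵥ star θk)).re ≥ ε ^ 2)
    (h2 : (θk ⬝ᵥ (Gam H β μk1 hhat *ᵥ star θk)).re = ε ^ 2)
    (h3 : (θk1 ⬝ᵥ (Ups H β μk1 hhat *ᵥ star θk1)).re
            ≥ (θk ⬝ᵥ (Ups H β μk1 hhat *ᵥ star θk)).re) :
    μk ≤ μk1 ∧
    (θk1 ⬝ᵥ (Ups H β μk1 hhat *ᵥ star θk1)).re
      ≥ (θk ⬝ᵥ (Ups H β μk hhat *ᵥ star θk)).re :=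
  alternating_optimization_monotone_general H hhat hβ.ne' hε.ne' hμk hμk1 h1 h2 h3
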